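/- Let A ⊆ ℕ be c.e. and non-computable, and let D be c.e. with D ⊂ₛ A and D ⊂ₘ A. Then a collection I of splits of A is a 3-acceptable ideal of B(A) if and only if there is a c.e. set C such that I = {X ⊑ A : X ∩ C ⊆* D}. -/

import Mathlib

/-- A set of natural numbers is computably enumerable if it is the domain of a
partial computable function. -/
def CE (A : Set ℕ) : Prop := ∃ f : ℕ →. ℕ, Partrec f ∧ A = f.Dom

/-- A set of natural numbers is computable if its membership predicate is computable. -/
def IsComputableSet (A : Set ℕ) : Prop := ComputablePred (· ∈ A)

/-- `X ⊆* Y` : `X ∖ Y` is finite. -/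
def SubsetStar (X Y : Set ℕ) : Prop := (X \ Y).Finite

/-- `X ⊑ A` : `X` is a split of the c.e. set `A`, i.e. `X` is c.e. and there is a
c.e. set `Y` with `X ∩ Y = ∅` and `X ∪ Y = A`. -/
def Split (A X : Set ℕ) : Prop := CE X ∧ ∃ Y : Set ℕ, CE Y ∧ X ∩ Y = ∅ ∧ X ∪ Y = A

/-- `B ⊂ₛ A` : `B` is a small subset of `A`. -/
def SmallSubset (B A : Set ℕ) : Prop :=
  B ⊆ A ∧ ∀ U V : Set ℕ, CE U → CE V → SubsetStar (U ∩ (A \ B)) V → CE ((U \ A) ∪ V)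

/-- `B ⊂ₘ A` : `B` is a major subset of `A`. -/
def MajorSubset (B A : Set ℕ) : Prop :=
  B ⊆ A ∧ (A \ B).Infinite ∧
    ∀ W : Set ℕ, CE W → A ∪ W = Set.univ → (Set.univ \ (B ∪ W)).Finite

/-- The `e`-th partial computable function, via the standard numbering by codes. -/
def phiFun (e : ℕ) : ℕ →. ℕ := (Denumerable.ofNat Nat.Partrec.Code e).eval

/-- `W e` : the `e`-th c.e. set, the domain of the `e`-th partial computable
function. -/
def Wset (e : ℕ) : Set ℕ := (phiFun e).Dom

/-- A set `P ⊆ ℕ` is `Σ⁰₃` if there is a computable relation `R ⊆ ℕ⁴` such that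
`n ∈ P ↔ ∃ a ∀ b ∃ c, R n a b c`. -/
def Sigma03 (P : Set ℕ) : Prop :=
  ∃ R : ℕ → ℕ → ℕ → ℕ → Prop,
    ComputablePred (fun t : ℕ × ℕ × ℕ × ℕ => R t.1 t.2.1 t.2.2.1 t.2.2.2) ∧
    ∀ n : ℕ, n ∈ P ↔ ∃ a : ℕ, ∀ b : ℕ, ∃ c : ℕ, R n a b c

/-- `I` is an ideal of the boolean algebra `B(A)` of splits of `A`: a nonempty
collection of splits of `A` closed under union and closed downward. -/
def IdealOfSplits (A : Set ℕ) (I : Set (Set ℕ)) : Prop :=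
  (∀ X ∈ I, Split A X) ∧ I.Nonempty ∧
    (∀ X ∈ I, ∀ Y ∈ I, X ∪ Y ∈ I) ∧
    (∀ X ∈ I, ∀ Y : Set ℕ, Split A Y → Y ⊆ X → Y ∈ I)

/-- `I` is a 3-acceptable ideal of `B(A)`: an ideal containing all computable
subsets of `A` whose index set is `Σ⁰₃`. -/
def ThreeAcceptable (A : Set ℕ) (I : Set (Set ℕ)) : Prop :=
  IdealOfSplits A I ∧
    (∀ R : Set ℕ, IsComputableSet R → R ⊆ A → R ∈ I) ∧
    Sigma03 {e : ℕ | Wset e ∈ I}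

/-!
Suppose `I` is 3-acceptable. Since its index set is `Σ⁰₃`, there is a `Π⁰₂` enumeration of pairs
`(X n, Y n)` of c.e. sets, of which the correct ones are the members of `I` with their complements
in `A`. Enlarge `Y n` to a c.e. set `Z n` which gets almost all of `A` if the `n`-th guess is wrong;
as `D` is a major subset, this adds only finitely many elements outside `D` if the guess is right.
A set `C` is built to be almost contained in every `Z n` modulo `D`, and to contain, for every c.e.
`W` and infinitely many `p`, an element outside `D` of `W ∩ ⋂ n < p, Z n` above `p` if there is one.
Then `X ∩ C ⊆* D` for `X ∈ I`. Conversely, if `X ∩ C ⊆* D`, then some `X ∩ ⋂ n < p, Z n` is almost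
contained in `D`, hence `X ⊆* U ∪ D` for some `U ∈ I`, and smallness of `D` makes the rest of `X`
coverable by a computable subset of `A`, so `X ∈ I`.
-/

section REPred

variable {α β σ : Type*} [Primcodable α] [Primcodable β] [Primcodable σ] {p q : α → Prop}

theorem rePred_iff_exists_partrec :
    REPred p ↔ ∃ f : α →. Unit, Partrec f ∧ ∀ a, (f a).Dom ↔ p a :=
  ⟨fun hp => ⟨_, hp, fun a => by simp [Part.assert]⟩, fun ⟨_, hf, h⟩ => hf.dom_re.of_eq h⟩

theorem rePred_comp {p : β → Prop} (hp : REPred p) {f : α → β} (hf : Computable f) :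
    REPred fun a => p (f a) :=
  Partrec.comp hp hf

theorem rePred_and (hp : REPred p) (hq : REPred q) : REPred fun a => p a ∧ q a := by
  obtain ⟨f, hf, hfp⟩ := rePred_iff_exists_partrec.1 hp
  obtain ⟨g, hg, hgq⟩ := rePred_iff_exists_partrec.1 hq
  exact (hf.bind (hg.comp Computable.fst).to₂).dom_re.of_eq fun a => by simp [← hfp, ← hgq]

theorem rePred_or (hp : REPred p) (hq : REPred q) : REPred fun a => p a ∨ q a := by
  obtain ⟨f, hf, hfp⟩ := rePred_iff_exists_partrec.1 hp
  obtain ⟨g, hg, hgq⟩ := rePred_iff_exists_partrec.1 hq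
  obtain ⟨k, hk, h⟩ := hf.merge' hg
  exact hk.dom_re.of_eq fun a => (h a).2.trans (or_congr (hfp a) (hgq a))

theorem rePred_mem {k : α →. σ} (hk : Partrec k) (y : σ) : REPred fun a => y ∈ k a := by
  have hy : REPred fun x : σ => x = y :=
    ((Primrec.eq.comp Primrec.id (Primrec.const y)).computablePred).to_re
  exact (hk.bind (Partrec.comp hy Computable.snd).to₂).dom_re.of_eq fun a => by
    simp [Part.assert, Part.dom_iff_mem]

theorem exists_rePred_reduction (hp : REPred p) (hq : REPred q) :
    ∃ p' q' : α → Prop, REPred p' ∧ REPred q' ∧ (∀ a, p' a → p a) ∧ (∀ a, q' a → q a) ∧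
      (∀ a, p' a → ¬ q' a) ∧ ∀ a, p a ∨ q a → p' a ∨ q' a := by
  obtain ⟨f, hf, hfp⟩ := rePred_iff_exists_partrec.1 hp
  obtain ⟨g, hg, hgq⟩ := rePred_iff_exists_partrec.1 hq
  obtain ⟨k, hk, hkfg⟩ := Partrec.merge' (hf.map (Computable.const true).to₂)
    (hg.map (Computable.const false).to₂)
  refine ⟨fun a => true ∈ k a, fun a => false ∈ k a, rePred_mem hk _, rePred_mem hk _,
    fun a ha => ?_, fun a ha => ?_, fun a ha ha' => ?_, fun a ha => ?_⟩
  · simpa [← hfp, Part.dom_iff_mem] using (hkfg a).1 _ ha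
  · simpa [← hgq, Part.dom_iff_mem] using (hkfg a).1 _ ha
  · simpa using Part.mem_unique ha ha'
  · obtain ⟨b, hb⟩ := Part.dom_iff_mem.1 ((hkfg a).2.2 (by simpa [hfp, hgq] using ha))
    cases b
    · exact Or.inr hb
    · exact Or.inl hb

theorem rePred_exists_of_computablePred {R : α → ℕ → Prop}
    (hR : ComputablePred fun x : α × ℕ => R x.1 x.2) : REPred fun a => ∃ n, R a n := by
  obtain ⟨f, hf, hfR⟩ := ComputablePred.computable_iff.1 hR
  have hfR (a n) : R a n ↔ f (a, n) = true := iff_of_eq (congrFun hfR (a, n))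
  have hrfind : Partrec fun a => Nat.rfind fun n => Part.some (f (a, n)) := Partrec.rfind hf.partrec
  exact hrfind.dom_re.of_eq fun a => by
    simp only [hfR]
    exact Nat.rfind_dom.trans (by simp)

theorem exists_monotone_stages_of_rePred (hp : REPred p) :
    ∃ R : α → ℕ → Prop, ComputablePred (fun x : α × ℕ => R x.1 x.2) ∧ (∀ a, Monotone (R a)) ∧
      ∀ a, p a ↔ ∃ s, R a s := by
  obtain ⟨f, hf, hfp⟩ := rePred_iff_exists_partrec.1 hp
  obtain ⟨c, hc⟩ := Nat.Partrec.Code.exists_code.1 hf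
  refine ⟨fun a s => (c.evaln s (Encodable.encode a)).isSome, ?_, fun a s t hst => ?_, fun a => ?_⟩
  · refine ComputablePred.computable_iff.2 ⟨_, ?_, rfl⟩
    exact (Primrec.option_isSome.comp (Nat.Partrec.Code.primrec_evaln.comp
      ((Primrec.snd.pair (Primrec.const c)).pair (Primrec.encode.comp Primrec.fst)))).to_comp
  · intro h
    obtain ⟨y, hy⟩ := Option.isSome_iff_exists.1 h
    exact Option.isSome_iff_exists.2 ⟨y, Nat.Partrec.Code.evaln_mono hst hy⟩
  · have hdom : p a ↔ (c.eval (Encodable.encode a)).Dom := by simp [hc, hfp]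
    simp only [hdom, Part.dom_iff_mem, Nat.Partrec.Code.evaln_complete,
      Option.isSome_iff_exists, Option.mem_def]
    exact exists_comm

theorem rePred_exists {p : α → ℕ → Prop} (hp : REPred fun x : α × ℕ => p x.1 x.2) :
    REPred fun a => ∃ n, p a n := by
  obtain ⟨R, hR, -, hRp⟩ := exists_monotone_stages_of_rePred hp
  have hdiag : ComputablePred fun x : α × ℕ => R (x.1, x.2.unpair.1) x.2.unpair.2 := by
    have hunpair : Computable fun x : α × ℕ => x.2.unpair := Computable.unpair.comp Computable.snd
    exact ComputablePred.computable_of_manyOneReducible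
      ⟨fun x => ((x.1, x.2.unpair.1), x.2.unpair.2),
        (Computable.fst.pair (Computable.fst.comp hunpair)).pair (Computable.snd.comp hunpair),
        fun _ => Iff.rfl⟩ hR
  refine (rePred_exists_of_computablePred
    (R := fun a m => R (a, m.unpair.1) m.unpair.2) hdiag).of_eq fun a => ?_
  simp only [fun n => hRp (a, n)]
  exact ⟨fun ⟨m, hm⟩ => ⟨_, _, hm⟩, fun ⟨n, s, h⟩ => ⟨Nat.pair n s, by simpa using h⟩⟩

theorem rePred_forall_lt {p : α → ℕ → Prop} (hp : REPred fun x : α × ℕ => p x.1 x.2) {f : α → ℕ}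
    (hf : Computable f) : REPred fun a => ∀ n < f a, p a n := by
  obtain ⟨g, hg, hgp⟩ := rePred_iff_exists_partrec.1 hp
  have hstep : Partrec₂ fun (a : α) (x : ℕ × Unit) => g (a, x.1) :=
    hg.comp (Computable.fst.pair (Computable.fst.comp Computable.snd))
  refine (Partrec.nat_rec hf (Computable.const ()).partrec hstep).dom_re.of_eq fun a => ?_
  induction f a with
  | zero => simp
  | succ n ih =>
    rw [Nat.forall_lt_succ_right, ← ih]
    exact Part.bind_dom.trans (exists_prop.trans (and_congr_right fun _ => hgp (a, n)))

end REPred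

section CE

variable {A B X Y : Set ℕ}

theorem ce_iff_rePred : CE A ↔ REPred fun x => x ∈ A := by
  constructor
  · rintro ⟨f, hf, rfl⟩
    exact hf.dom_re
  · intro hA
    obtain ⟨f, hf, hfA⟩ := rePred_iff_exists_partrec.1 hA
    exact ⟨fun x => (f x).map fun _ => 0, hf.map (Computable.const 0).to₂,
      Set.ext fun x => (hfA x).symm⟩

theorem ce_iff_exists_eq_Wset : CE A ↔ ∃ e, A = Wset e := by
  constructor
  · rintro ⟨f, hf, rfl⟩
    obtain ⟨c, hc⟩ := Nat.Partrec.Code.exists_code.1 (Partrec.nat_iff.1 hf)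
    exact ⟨Encodable.encode c, by simp [Wset, phiFun, hc]⟩
  · rintro ⟨e, rfl⟩
    exact ⟨phiFun e, Partrec.nat_iff.2 (Nat.Partrec.Code.exists_code.2 ⟨_, rfl⟩), rfl⟩

theorem CE.union (hA : CE A) (hB : CE B) : CE (A ∪ B) :=
  ce_iff_rePred.2 (rePred_or (ce_iff_rePred.1 hA) (ce_iff_rePred.1 hB))

theorem CE.inter (hA : CE A) (hB : CE B) : CE (A ∩ B) :=
  ce_iff_rePred.2 (rePred_and (ce_iff_rePred.1 hA) (ce_iff_rePred.1 hB))

theorem isComputableSet_iff_ce_and_ce_compl : IsComputableSet A ↔ CE A ∧ CE Aᶜ := by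
  rw [ce_iff_rePred, ce_iff_rePred]
  exact ComputablePred.computable_iff_re_compl_re'

theorem isComputableSet_empty : IsComputableSet ∅ :=
  ComputablePred.computable_iff.2 ⟨fun _ => false, Computable.const false, by ext; simp⟩

theorem split_iff_ce_sdiff : Split A X ↔ CE X ∧ X ⊆ A ∧ CE (A \ X) := by
  constructor
  · rintro ⟨hX, Y, hY, hXY, rfl⟩
    have hY_eq : (X ∪ Y) \ X = Y := by
      rw [Set.union_sdiff_left, (Set.disjoint_iff_inter_eq_empty.2 hXY).symm.sdiff_eq_left]
    exact ⟨hX, Set.subset_union_left, hY_eq.symm ▸ hY⟩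
  · rintro ⟨hX, hXA, hAX⟩
    exact ⟨hX, A \ X, hAX, Set.inter_sdiff_self X A, Set.union_sdiff_cancel hXA⟩

theorem Split.subset (hX : Split A X) : X ⊆ A :=
  (split_iff_ce_sdiff.1 hX).2.1

theorem Split.union (hX : Split A X) (hY : Split A Y) : Split A (X ∪ Y) := by
  rw [split_iff_ce_sdiff] at *
  refine ⟨hX.1.union hY.1, Set.union_subset hX.2.1 hY.2.1, ?_⟩
  rw [← Set.sdiff_inter_sdiff]
  exact hX.2.2.inter hY.2.2

theorem Split.sdiff (hX : Split A X) : Split A (A \ X) := by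
  obtain ⟨hX, hXA, hAX⟩ := split_iff_ce_sdiff.1 hX
  exact split_iff_ce_sdiff.2 ⟨hAX, Set.sdiff_subset, by rwa [Set.sdiff_sdiff_cancel_left hXA]⟩

theorem IsComputableSet.split {R : Set ℕ} (hR : IsComputableSet R) (hA : CE A) (hRA : R ⊆ A) :
    Split A R :=
  have ⟨hR, hRc⟩ := isComputableSet_iff_ce_and_ce_compl.1 hR
  split_iff_ce_sdiff.2 ⟨hR, hRA, hA.inter hRc⟩

end CE

section SubsetStar

variable {X X' Y Y' D A W : Set ℕ}

theorem SubsetStar.mono (h : SubsetStar X Y) (hX : X' ⊆ X) (hY : Y ⊆ Y') : SubsetStar X' Y' :=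
  Set.Finite.subset h (Set.sdiff_subset_sdiff hX hY)

theorem SubsetStar.union (hX : SubsetStar X D) (hY : SubsetStar Y D) : SubsetStar (X ∪ Y) D := by
  rw [SubsetStar, Set.union_sdiff_distrib]
  exact Set.Finite.union hX hY

theorem subsetStar_iff_exists_subset_union_Iio :
    SubsetStar X D ↔ ∃ N, X ⊆ D ∪ Set.Iio N := by
  simp only [← Set.sdiff_subset_iff]
  constructor
  · intro h
    obtain ⟨m, hm⟩ := h.bddAbove
    exact ⟨m + 1, fun x hx => Nat.lt_succ_of_le (hm hx)⟩
  · rintro ⟨N, hN⟩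
    exact (Set.finite_Iio N).subset hN

theorem MajorSubset.subsetStar_compl (hD : MajorSubset D A) (hW : CE W) (hAW : A ∪ W = Set.univ) :
    SubsetStar Wᶜ D :=
  (hD.2.2 W hW hAW).subset fun _ hx => ⟨trivial, fun h => h.elim hx.2 hx.1⟩

theorem SmallSubset.isComputableSet_sdiff (hD : SmallSubset D A) {V : Set ℕ} (hV : Split A V)
    (hADV : SubsetStar (A \ D) V) : IsComputableSet (A \ V) := by
  obtain ⟨hVce, -, hAV⟩ := split_iff_ce_sdiff.1 hV
  have huniv : CE Set.univ :=
    Set.compl_empty ▸ (isComputableSet_iff_ce_and_ce_compl.1 isComputableSet_empty).2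
  have hcompl : (A \ V)ᶜ = Set.univ \ A ∪ V := by
    rw [Set.compl_sdiff, Set.compl_eq_univ_sdiff, Set.union_comm]
  refine isComputableSet_iff_ce_and_ce_compl.2 ⟨hAV, hcompl ▸ hD.2 _ V huniv hVce ?_⟩
  rwa [Set.univ_inter]

end SubsetStar

section UniformlyCE

variable {ι κ : Type*} [Primcodable ι] [Primcodable κ] {A D : Set ℕ} {X Y : ι → Set ℕ}

/-- A family of subsets of `ℕ` is uniformly c.e. if its members are c.e. by a single procedure
taking the index as a parameter. -/
def UniformlyCE (X : ι → Set ℕ) : Prop := REPred fun a : ι × ℕ => a.2 ∈ X a.1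

theorem uniformlyCE_Wset : UniformlyCE Wset :=
  (Nat.Partrec.Code.eval_part.comp
    ((Computable.ofNat _).comp Computable.fst) Computable.snd).dom_re

theorem CE.uniformlyCE (hA : CE A) : UniformlyCE fun _ : ι => A :=
  rePred_comp (ce_iff_rePred.1 hA) Computable.snd

theorem UniformlyCE.ce (hX : UniformlyCE X) (i : ι) : CE (X i) :=
  ce_iff_rePred.2 (rePred_comp hX ((Computable.const i).pair Computable.id))

theorem UniformlyCE.comp (hX : UniformlyCE X) {f : κ → ι} (hf : Computable f) :
    UniformlyCE fun k => X (f k) :=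
  rePred_comp hX ((hf.comp Computable.fst).pair Computable.snd)

theorem UniformlyCE.inter (hX : UniformlyCE X) (hY : UniformlyCE Y) :
    UniformlyCE fun i => X i ∩ Y i :=
  rePred_and hX hY

theorem UniformlyCE.union (hX : UniformlyCE X) (hY : UniformlyCE Y) :
    UniformlyCE fun i => X i ∪ Y i :=
  rePred_or hX hY

theorem UniformlyCE.ce_iUnion {X : ℕ → Set ℕ} (hX : UniformlyCE X) : CE (⋃ n, X n) := by
  refine ce_iff_rePred.2 ((rePred_exists (p := fun x n => x ∈ X n) ?_).of_eq fun x => by simp)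
  exact rePred_comp hX (Computable.snd.pair Computable.fst)

theorem UniformlyCE.biInter_lt {X : ℕ → Set ℕ} (hX : UniformlyCE X) :
    UniformlyCE fun p => ⋂ n < p, X n := by
  refine (rePred_forall_lt (p := fun (a : ℕ × ℕ) n => a.2 ∈ X n) ?_ Computable.fst).of_eq
    fun a => by simp
  exact rePred_comp hX (Computable.snd.pair (Computable.snd.comp Computable.fst))

theorem uniformlyCE_Ici : UniformlyCE (Set.Ici : ℕ → Set ℕ) :=
  Primrec.nat_le.computablePred.to_re

/-- The elements of the set enumerated in stages by `R` that are, at some stage, preceded there only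
by elements of `D`: the successive guesses at its least element outside `D`. -/
def leastCandidates (R : ℕ → ℕ → Prop) (D : Set ℕ) : Set ℕ :=
  {x | ∃ s, R x s ∧ ∀ y < x, ¬ R y s ∨ y ∈ D}

theorem subsetStar_leastCandidates {R : ℕ → ℕ → Prop} (hR : ∀ x, Monotone (R x)) :
    SubsetStar (leastCandidates R D) D := by
  by_cases hRD : ∃ x t, R x t ∧ x ∉ D
  · obtain ⟨x, t, ht, hxD⟩ := hRD
    let G (s : ℕ) : Set ℕ := {z | R z s ∧ (∀ y < z, ¬ R y s ∨ y ∈ D) ∧ z ∉ D}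
    have hG (s : ℕ) : (G s).Subsingleton := by
      rintro y ⟨hyR, hy, hyD⟩ z ⟨hzR, hz, hzD⟩
      by_contra hyz
      rcases Nat.lt_or_gt_of_ne hyz with h | h
      · exact (hz y h).elim (fun hR => hR hyR) hyD
      · exact (hy z h).elim (fun hR => hR hzR) hzD
    -- From stage `t` on, `x` keeps every larger element from becoming a candidate.
    refine ((Set.finite_Iic x).union
      ((Set.finite_Iio t).biUnion fun s _ => (hG s).finite)).subset ?_
    rintro z ⟨⟨s, hzR, hz⟩, hzD⟩
    refine (le_or_gt z x).imp id fun hxz => Set.mem_biUnion (Set.mem_Iio.2 ?_) ⟨hzR, hz, hzD⟩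
    by_contra hst
    exact (hz x hxz).elim (fun hxR => hxR (hR x (not_lt.1 hst) ht)) hxD
  · push Not at hRD
    exact Set.finite_empty.subset fun x ⟨⟨s, hs, _⟩, hxD⟩ => hxD (hRD x s hs)

theorem mem_of_leastCandidates_subset {R : ℕ → ℕ → Prop} (hRD : leastCandidates R D ⊆ D)
    {x s : ℕ} (hx : R x s) : x ∈ D := by
  induction x using Nat.strong_induction_on with
  | _ x ih => exact hRD ⟨s, hx, fun y hy => or_iff_not_imp_left.2 fun h => ih y hy (not_not.1 h)⟩

theorem uniformlyCE_leastCandidates {R : ι × ℕ → ℕ → Prop}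
    (hR : ComputablePred fun a : (ι × ℕ) × ℕ => R a.1 a.2) (hD : CE D) :
    UniformlyCE fun i => leastCandidates (fun x => R (i, x)) D := by
  have hbelow : REPred fun a : (ι × ℕ) × ℕ => ∀ y < a.1.2, ¬ R (a.1.1, y) a.2 ∨ y ∈ D := by
    refine rePred_forall_lt (p := fun (a : (ι × ℕ) × ℕ) y => ¬ R (a.1.1, y) a.2 ∨ y ∈ D) ?_
      (Computable.snd.comp Computable.fst)
    refine rePred_or (rePred_comp hR.not.to_re
      (f := fun a : ((ι × ℕ) × ℕ) × ℕ => ((a.1.1.1, a.2), a.1.2)) ?_)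
      (rePred_comp (ce_iff_rePred.1 hD) Computable.snd)
    exact ((Computable.fst.comp (Computable.fst.comp Computable.fst)).pair Computable.snd).pair
      (Computable.snd.comp Computable.fst)
  exact rePred_exists (p := fun (a : ι × ℕ) s => R a s ∧ ∀ y < a.2, ¬ R (a.1, y) s ∨ y ∈ D)
    (rePred_and hR.to_re hbelow)

theorem UniformlyCE.exists_subset_subsetStar {E : ι → Set ℕ} (hE : UniformlyCE E) (hD : CE D) :
    ∃ C : ι → Set ℕ, UniformlyCE C ∧ (∀ i, C i ⊆ E i) ∧ (∀ i, SubsetStar (C i) D) ∧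
      ∀ i, C i ⊆ D → E i ⊆ D := by
  obtain ⟨R, hR, hRmono, hRE⟩ := exists_monotone_stages_of_rePred hE
  refine ⟨fun i => leastCandidates (fun x => R (i, x)) D, uniformlyCE_leastCandidates hR hD,
    fun i x ⟨s, hs, _⟩ => (hRE (i, x)).2 ⟨s, hs⟩,
    fun i => subsetStar_leastCandidates fun x => hRmono (i, x), fun i hCD x hx => ?_⟩
  obtain ⟨s, hs⟩ := (hRE (i, x)).1 hx
  exact mem_of_leastCandidates_subset hCD hs

/-- `C` takes from `W ∩ ⋂ n < p, Z n`, for each c.e. set `W` and infinitely many `p`, an element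
`≥ p` outside `D` if there is one. -/
theorem UniformlyCE.exists_ce_pseudoIntersection {Z : ℕ → Set ℕ} (hZ : UniformlyCE Z)
    (hD : CE D) :
    ∃ C, CE C ∧ (∀ n, SubsetStar C (Z n ∪ D)) ∧
      ∀ W, CE W → SubsetStar (W ∩ C) D → ∃ p, SubsetStar (W ∩ ⋂ n < p, Z n) D := by
  have hE : UniformlyCE fun p => Set.Ici p ∩ Wset p.unpair.1 ∩ ⋂ n < p, Z n :=
    (uniformlyCE_Ici.inter (uniformlyCE_Wset.comp (Computable.fst.comp Computable.unpair))).inter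
      hZ.biInter_lt
  obtain ⟨C, hC, hCE, hCD, hED⟩ := hE.exists_subset_subsetStar hD
  refine ⟨⋃ p, C p, hC.ce_iUnion, fun n => ?_, fun W hW hWC => ?_⟩
  · refine ((Set.finite_Iic n).biUnion fun p _ => hCD p).subset ?_
    rintro x ⟨hx, hxZD⟩
    obtain ⟨p, hp⟩ := Set.mem_iUnion.1 hx
    have hpn : p ≤ n := by
      by_contra hnp
      exact hxZD (Or.inl (Set.mem_iInter₂.1 (hCE p hp).2 n (not_le.1 hnp)))
    exact Set.mem_biUnion hpn ⟨hp, fun hxD => hxZD (Or.inr hxD)⟩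
  · obtain ⟨e, rfl⟩ := ce_iff_exists_eq_Wset.1 hW
    obtain ⟨N, hN⟩ := subsetStar_iff_exists_subset_union_Iio.1 hWC
    let p := Nat.pair e N
    have he : p.unpair.1 = e := by simp [p]
    have hCpD : C p ⊆ D := fun x hx => by
      obtain ⟨⟨hpx, hxW⟩, -⟩ := hCE p hx
      have hNx : N ≤ x := (Nat.right_le_pair e N).trans hpx
      exact (hN ⟨he ▸ hxW, Set.mem_iUnion_of_mem p hx⟩).resolve_right hNx.not_gt
    refine ⟨p, subsetStar_iff_exists_subset_union_Iio.2 ⟨p, fun x ⟨hxW, hxZ⟩ => ?_⟩⟩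
    exact (lt_or_ge x p).symm.imp_left fun hpx => hED p hCpD ⟨⟨hpx, he.symm ▸ hxW⟩, hxZ⟩

end UniformlyCE

section ArithmeticalHierarchy

variable {α β : Type*} [Primcodable α] [Primcodable β] {P Q : α → Prop}

/-- `P` is a `Π⁰₂` predicate: a universal quantifier in front of a c.e. predicate, which absorbs the
inner existential quantifier. -/
def IsPi02 (P : α → Prop) : Prop :=
  ∃ Q : α → ℕ → Prop, REPred (fun x : α × ℕ => Q x.1 x.2) ∧ ∀ a, P a ↔ ∀ b, Q a b

theorem IsPi02.comp {P : β → Prop} (hP : IsPi02 P) {f : α → β} (hf : Computable f) :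
    IsPi02 fun a => P (f a) := by
  obtain ⟨Q, hQ, hPQ⟩ := hP
  exact ⟨fun a => Q (f a), rePred_comp hQ ((hf.comp Computable.fst).pair Computable.snd),
    fun a => hPQ (f a)⟩

theorem IsPi02.and (hP : IsPi02 P) (hQ : IsPi02 Q) : IsPi02 fun a => P a ∧ Q a := by
  obtain ⟨P', hP', hPP'⟩ := hP
  obtain ⟨Q', hQ', hQQ'⟩ := hQ
  refine ⟨fun a b => P' a b ∧ Q' a b, rePred_and hP' hQ', fun a => ?_⟩
  simp only [hPP', hQQ', forall_and]

theorem UniformlyCE.isPi02_subset {X Y : α → Set ℕ} (hX : UniformlyCE X) (hY : UniformlyCE Y) :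
    IsPi02 fun a => X a ⊆ Y a := by
  obtain ⟨R, hR, -, hRX⟩ := exists_monotone_stages_of_rePred hX
  have hunpair : Computable fun x : α × ℕ => x.2.unpair := Computable.unpair.comp Computable.snd
  have helt : Computable fun x : α × ℕ => (x.1, x.2.unpair.1) :=
    Computable.fst.pair (Computable.fst.comp hunpair)
  refine ⟨fun a b => ¬ R (a, b.unpair.1) b.unpair.2 ∨ b.unpair.1 ∈ Y a,
    rePred_or (rePred_comp hR.not.to_re (helt.pair (Computable.snd.comp hunpair)))
      (rePred_comp hY helt), fun a => ⟨fun h b => ?_, fun h x hx => ?_⟩⟩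
  · exact or_iff_not_imp_left.2 fun hb => h ((hRX (a, b.unpair.1)).2 ⟨_, not_not.1 hb⟩)
  · obtain ⟨s, hs⟩ := (hRX (a, x)).1 hx
    simpa [hs] using h (Nat.pair x s)

theorem isPi02_inter_eq_empty_and_union_eq {A : Set ℕ} (hA : CE A) {X Y : α → Set ℕ}
    (hX : UniformlyCE X) (hY : UniformlyCE Y) :
    IsPi02 fun a => X a ∩ Y a = ∅ ∧ X a ∪ Y a = A := by
  have hempty : CE ∅ := (isComputableSet_iff_ce_and_ce_compl.1 isComputableSet_empty).1
  simp only [← Set.subset_empty_iff, Set.Subset.antisymm_iff (b := A)]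
  exact ((hX.inter hY).isPi02_subset hempty.uniformlyCE).and
    (((hX.union hY).isPi02_subset hA.uniformlyCE).and (hA.uniformlyCE.isPi02_subset (hX.union hY)))

open Computable in
theorem sigma03_iff_exists_isPi02 {S : Set ℕ} :
    Sigma03 S ↔ ∃ P : ℕ → ℕ → Prop, IsPi02 (fun x : ℕ × ℕ => P x.1 x.2) ∧
      ∀ n, n ∈ S ↔ ∃ a, P n a := by
  constructor
  · rintro ⟨R, hR, hRS⟩
    refine ⟨fun n a => ∀ b, ∃ c, R n a b c, ⟨fun x b => ∃ c, R x.1 x.2 b c, ?_, fun _ => Iff.rfl⟩,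
      hRS⟩
    refine rePred_exists (p := fun (x : (ℕ × ℕ) × ℕ) c => R x.1.1 x.1.2 x.2 c) ?_
    have hassoc : Computable fun x : ((ℕ × ℕ) × ℕ) × ℕ => (x.1.1.1, x.1.1.2, x.1.2, x.2) :=
      (fst.comp (fst.comp fst)).pair
        ((snd.comp (fst.comp fst)).pair ((snd.comp fst).pair snd))
    exact (rePred_comp hR.to_re hassoc).of_eq fun _ => Iff.rfl
  · rintro ⟨P, ⟨Q, hQ, hPQ⟩, hPS⟩
    obtain ⟨R, hR, -, hRQ⟩ := exists_monotone_stages_of_rePred hQ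
    have hassoc : Computable fun t : ℕ × ℕ × ℕ × ℕ => (((t.1, t.2.1), t.2.2.1), t.2.2.2) :=
      ((fst.pair (fst.comp snd)).pair (fst.comp (snd.comp snd))).pair (snd.comp (snd.comp snd))
    refine ⟨fun n a b c => R ((n, a), b) c,
      ComputablePred.computable_of_manyOneReducible ⟨_, hassoc, fun _ => Iff.rfl⟩ hR, fun n => ?_⟩
    simp only [hPS, fun a => hPQ (n, a), fun a b => hRQ ((n, a), b)]

theorem Sigma03.inter {S T : Set ℕ} (hS : Sigma03 S) (hT : Sigma03 T) : Sigma03 (S ∩ T) := by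
  rw [sigma03_iff_exists_isPi02] at *
  obtain ⟨P, hP, hPS⟩ := hS
  obtain ⟨Q, hQ, hQT⟩ := hT
  have hunpair : Computable fun x : ℕ × ℕ => x.2.unpair := Computable.unpair.comp Computable.snd
  refine ⟨fun n a => P n a.unpair.1 ∧ Q n a.unpair.2,
    (hP.comp (Computable.fst.pair (Computable.fst.comp hunpair))).and
      (hQ.comp (Computable.fst.pair (Computable.snd.comp hunpair))), fun n => ?_⟩
  rw [Set.mem_inter_iff, hPS, hQT]
  constructor
  · rintro ⟨⟨a, ha⟩, b, hb⟩
    exact ⟨Nat.pair a b, by simpa using ⟨ha, hb⟩⟩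
  · rintro ⟨c, ha, hb⟩
    exact ⟨⟨_, ha⟩, _, hb⟩

theorem sigma03_setOf_split_Wset {A : Set ℕ} (hA : CE A) : Sigma03 {e | Split A (Wset e)} := by
  refine sigma03_iff_exists_isPi02.2
    ⟨fun e i => Wset e ∩ Wset i = ∅ ∧ Wset e ∪ Wset i = A,
      isPi02_inter_eq_empty_and_union_eq hA (uniformlyCE_Wset.comp Computable.fst)
        (uniformlyCE_Wset.comp Computable.snd), fun e => ⟨?_, ?_⟩⟩
  · rintro ⟨-, Y, hY, hYA⟩
    obtain ⟨i, rfl⟩ := ce_iff_exists_eq_Wset.1 hY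
    exact ⟨i, hYA⟩
  · rintro ⟨i, hi⟩
    exact ⟨uniformlyCE_Wset.ce e, Wset i, uniformlyCE_Wset.ce i, hi⟩

theorem sigma03_setOf_subsetStar {X : ℕ → Set ℕ} {D : Set ℕ} (hX : UniformlyCE X) (hD : CE D) :
    Sigma03 {e | SubsetStar (X e) D} := by
  have hIio : UniformlyCE (Set.Iio : ℕ → Set ℕ) := Primrec.nat_lt.swap.computablePred.to_re
  exact sigma03_iff_exists_isPi02.2 ⟨fun e N => X e ⊆ D ∪ Set.Iio N,
    (hX.comp Computable.fst).isPi02_subset (hD.uniformlyCE.union (hIio.comp Computable.snd)),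
    fun e => subsetStar_iff_exists_subset_union_Iio⟩

/-- `S a` collects the `x` which do not enter `A` before the first `x + 1` instances of the `Π⁰₂`
predicate `P a` are confirmed. -/
theorem IsPi02.exists_uniformlyCE_union_eq_univ {P : α → Prop} (hP : IsPi02 P) {A : Set ℕ}
    (hA : CE A) :
    ∃ S : α → Set ℕ, UniformlyCE S ∧ UniformlyCE (fun a => A \ S a) ∧
      (∀ a, P a → A ∪ S a = Set.univ) ∧ ∀ a, ¬ P a → (S a).Finite := by
  obtain ⟨Q, hQ, hPQ⟩ := hP
  have hQ_le : REPred fun x : α × ℕ => ∀ b < x.2 + 1, Q x.1 b :=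
    rePred_forall_lt (p := fun (x : α × ℕ) b => Q x.1 b)
      (rePred_comp hQ ((Computable.fst.comp Computable.fst).pair Computable.snd))
      (Computable.succ.comp Computable.snd)
  obtain ⟨A', S, hA', hS, hA'A, hSQ, hA'S, hcover⟩ :=
    exists_rePred_reduction (rePred_comp (ce_iff_rePred.1 hA) Computable.snd) hQ_le
  refine ⟨fun a => {x | S (a, x)}, hS, hA'.of_eq fun x => ⟨fun hx => ⟨hA'A x hx, hA'S x hx⟩,
    fun ⟨hxA, hxS⟩ => (hcover x (Or.inl hxA)).resolve_right hxS⟩, fun a ha => ?_, fun a ha => ?_⟩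
  · refine Set.eq_univ_of_forall fun x => (hcover (a, x) (Or.inr fun b _ => ?_)).imp_left (hA'A _)
    exact (hPQ a).1 ha b
  · obtain ⟨b, hb⟩ := not_forall.1 (mt (hPQ a).2 ha)
    refine (Set.finite_Iio b).subset fun x hx => ?_
    by_contra hbx
    exact hb (hSQ _ hx b (Nat.lt_succ_of_le (not_lt.1 hbx)))

end ArithmeticalHierarchy

section Ideals

variable {A D U X C : Set ℕ} {I : Set (Set ℕ)}

theorem IdealOfSplits.biUnion_lt_mem (hI : IdealOfSplits A I) (hempty : ∅ ∈ I) {X : ℕ → Set ℕ}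
    (hX : ∀ n, X n ∈ I) (p : ℕ) : ⋃ n < p, X n ∈ I := by
  induction p with
  | zero => simpa using hempty
  | succ p ih =>
    rw [Set.biUnion_lt_succ]
    exact hI.2.2.1 _ ih _ (hX p)

theorem exists_isPi02_enumeration (hA : CE A) (hI : ∀ X ∈ I, Split A X)
    (hindex : Sigma03 {e | Wset e ∈ I}) :
    ∃ (G : ℕ → Prop) (X Y : ℕ → Set ℕ), IsPi02 G ∧ UniformlyCE Y ∧
      (∀ n, G n → X n ∈ I ∧ X n ∩ Y n = ∅ ∧ X n ∪ Y n = A) ∧ ∀ Z ∈ I, ∃ n, G n ∧ X n = Z := by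
  obtain ⟨P, hP, hPI⟩ := sigma03_iff_exists_isPi02.1 hindex
  have hdecode : Computable (Denumerable.ofNat (ℕ × ℕ × ℕ)) := Computable.ofNat _
  have he := Computable.fst.comp hdecode
  have hi := Computable.fst.comp (Computable.snd.comp hdecode)
  have ha := Computable.snd.comp (Computable.snd.comp hdecode)
  refine ⟨_, _, _, (hP.comp (he.pair ha)).and (isPi02_inter_eq_empty_and_union_eq hA
    (uniformlyCE_Wset.comp he) (uniformlyCE_Wset.comp hi)), uniformlyCE_Wset.comp hi,
    fun n ⟨hPn, hn⟩ => ⟨(hPI _).2 ⟨_, hPn⟩, hn⟩, fun Z hZ => ?_⟩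
  obtain ⟨hZce, Y, hY, hZY⟩ := hI Z hZ
  obtain ⟨e, rfl⟩ := ce_iff_exists_eq_Wset.1 hZce
  obtain ⟨i, rfl⟩ := ce_iff_exists_eq_Wset.1 hY
  obtain ⟨a, hPa⟩ := (hPI e).1 hZ
  exact ⟨Encodable.encode (e, i, a), by simpa using ⟨hPa, hZY⟩⟩

/-- The `Π⁰₂` enumeration of `I` has wrong guesses, which cannot be removed effectively: at those,
`X n` is taken to be `∅`, and `Z n` still almost contains `A`. -/
theorem MajorSubset.exists_uniformlyCE_complements (hD : MajorSubset D A) (hA : CE A)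
    (hI : ∀ X ∈ I, Split A X) (hempty : ∅ ∈ I) (hindex : Sigma03 {e | Wset e ∈ I}) :
    ∃ X Z : ℕ → Set ℕ, UniformlyCE Z ∧ (∀ n, X n ∈ I) ∧ I ⊆ Set.range X ∧
      (∀ n, SubsetStar (X n ∩ Z n) D) ∧ ∀ n, SubsetStar A (X n ∪ Z n) := by
  classical
  obtain ⟨G, X, Y, hG, hY, hXY, hGI⟩ := exists_isPi02_enumeration hA hI hindex
  obtain ⟨S, hS, hAS, hSuniv, hSfin⟩ := hG.exists_uniformlyCE_union_eq_univ hA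
  refine ⟨fun n => if G n then X n else ∅, fun n => A \ S n ∪ Y n, hAS.union hY, fun n => ?_,
    fun Z hZ => ?_, fun n => ?_, fun n => ?_⟩
  · by_cases hn : G n
    · simpa only [if_pos hn] using (hXY n hn).1
    · simpa only [if_neg hn] using hempty
  · obtain ⟨n, hn, rfl⟩ := hGI Z hZ
    exact ⟨n, if_pos hn⟩
  · by_cases hn : G n
    · refine (hD.subsetStar_compl (hS.ce n) (hSuniv n hn)).mono ?_ subset_rfl
      simp only [if_pos hn, Set.inter_union_distrib_left, (hXY n hn).2.1, Set.union_empty]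
      exact fun x hx => hx.2.2
    · simp [hn, SubsetStar]
  · by_cases hn : G n
    · have hAXZ : A ⊆ X n ∪ (A \ S n ∪ Y n) :=
        (hXY n hn).2.2.symm.subset.trans (Set.union_subset_union_right _ Set.subset_union_right)
      simp [hn, SubsetStar, Set.sdiff_eq_empty.2 hAXZ]
    · refine (hSfin n hn).subset fun x ⟨hxA, hx⟩ => ?_
      by_contra hxS
      exact hx (Or.inr (Or.inl ⟨hxA, hxS⟩))

theorem SmallSubset.mem_of_subsetStar_union (hD : SmallSubset D A) (hI : IdealOfSplits A I)
    (hcomp : ∀ R, IsComputableSet R → R ⊆ A → R ∈ I) (hU : U ∈ I) (hX : Split A X)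
    (hXU : SubsetStar X (U ∪ D)) : X ∈ I := by
  have hV : Split A (A \ X ∪ U) := hX.sdiff.union (hI.1 U hU)
  have hADV : SubsetStar (A \ D) (A \ X ∪ U) := by
    refine hXU.subset fun x ⟨⟨hxA, hxD⟩, hxV⟩ => ?_
    have hxX : x ∈ X := by
      by_contra h
      exact hxV (Or.inl ⟨hxA, h⟩)
    exact ⟨hxX, fun h => h.elim (fun hxU => hxV (Or.inr hxU)) hxD⟩
  have hAV : A \ (A \ X ∪ U) ∈ I := hcomp _ (hD.isComputableSet_sdiff hV hADV) Set.sdiff_subset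
  refine hI.2.2.2 _ (hI.2.2.1 _ hAV U hU) X hX fun x hx => ?_
  by_cases hxU : x ∈ U
  · exact Or.inr hxU
  · exact Or.inl ⟨hX.subset hx, fun h => h.elim (fun h => h.2 hx) hxU⟩

theorem subsetStar_biUnion_lt_union {X Z : ℕ → Set ℕ} {p : ℕ}
    (hAXZ : ∀ n, SubsetStar A (X n ∪ Z n)) (hAZ : SubsetStar (A ∩ ⋂ n < p, Z n) D) :
    SubsetStar A ((⋃ n < p, X n) ∪ D) := by
  refine (Set.Finite.union hAZ ((Set.finite_Iio p).biUnion fun n _ => hAXZ n)).subset ?_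
  rintro x ⟨hxA, hx⟩
  rw [Set.mem_union, Set.mem_iUnion₂, not_or, not_exists] at hx
  by_cases hxZ : x ∈ ⋂ n < p, Z n
  · exact Or.inl ⟨⟨hxA, hxZ⟩, hx.2⟩
  · obtain ⟨n, hn, hxZn⟩ : ∃ n < p, x ∉ Z n := by simpa using hxZ
    exact Or.inr (Set.mem_biUnion hn ⟨hxA, fun h => h.elim (fun h => hx.1 n ⟨hn, h⟩) hxZn⟩)

theorem ThreeAcceptable.exists_ce_eq (hI : ThreeAcceptable A I) (hA : CE A) (hDce : CE D)
    (hsmall : SmallSubset D A) (hmajor : MajorSubset D A) :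
    ∃ C, CE C ∧ I = {X | Split A X ∧ SubsetStar (X ∩ C) D} := by
  obtain ⟨hideal, hcomp, hindex⟩ := hI
  have hempty : ∅ ∈ I := hcomp ∅ isComputableSet_empty (Set.empty_subset A)
  obtain ⟨X, Z, hZ, hXI, hIX, hXZ, hAXZ⟩ :=
    hmajor.exists_uniformlyCE_complements hA hideal.1 hempty hindex
  obtain ⟨C, hC, hCZ, hCtest⟩ := hZ.exists_ce_pseudoIntersection hDce
  refine ⟨C, hC, Set.Subset.antisymm (fun V hV => ⟨hideal.1 V hV, ?_⟩) fun V ⟨hV, hVC⟩ => ?_⟩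
  · obtain ⟨n, rfl⟩ := hIX hV
    refine (Set.Finite.union (hCZ n) (hXZ n)).subset fun x ⟨⟨hxX, hxC⟩, hxD⟩ => ?_
    by_cases hxZ : x ∈ Z n
    · exact Or.inr ⟨⟨hxX, hxZ⟩, hxD⟩
    · exact Or.inl ⟨hxC, fun h => h.elim hxZ hxD⟩
  · obtain ⟨p, hp⟩ := hCtest V hV.1 hVC
    exact hsmall.mem_of_subsetStar_union hideal hcomp (hideal.biUnion_lt_mem hempty hXI p) hV
      (subsetStar_biUnion_lt_union (fun n => (hAXZ n).mono hV.subset subset_rfl) hp)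

theorem MajorSubset.threeAcceptable (hD : MajorSubset D A) (hA : CE A) (hDce : CE D) (hC : CE C) :
    ThreeAcceptable A {X | Split A X ∧ SubsetStar (X ∩ C) D} := by
  have hcomp (R : Set ℕ) (hR : IsComputableSet R) (hRA : R ⊆ A) :
      Split A R ∧ SubsetStar (R ∩ C) D := by
    have hRD : SubsetStar Rᶜᶜ D :=
      hD.subsetStar_compl (isComputableSet_iff_ce_and_ce_compl.1 hR).2 <|
        Set.eq_univ_of_forall fun x => (em (x ∈ R)).imp_left (@hRA x)
    rw [compl_compl] at hRD
    exact ⟨hR.split hA hRA, hRD.mono Set.inter_subset_left subset_rfl⟩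
  refine ⟨⟨fun X hX => hX.1, ⟨∅, hcomp ∅ isComputableSet_empty (Set.empty_subset A)⟩,
    fun X ⟨hX, hXC⟩ Y ⟨hY, hYC⟩ => ⟨hX.union hY, ?_⟩, fun X ⟨_, hXC⟩ Y hY hYX =>
      ⟨hY, hXC.mono (Set.inter_subset_inter_left C hYX) subset_rfl⟩⟩, hcomp, ?_⟩
  · rw [Set.union_inter_distrib_right]
    exact hXC.union hYC
  · exact (sigma03_setOf_split_Wset hA).inter
      (sigma03_setOf_subsetStar (uniformlyCE_Wset.inter hC.uniformlyCE) hDce)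

end Ideals

/-- Let `A` be c.e. and non-computable and let `D` be c.e. with
`D ⊂ₛ A` and `D ⊂ₘ A`.  Then a collection `I` of splits of `A` is a 3-acceptable
ideal of `B(A)` iff there is a c.e. set `C` with `I = {X ⊑ A : X ∩ C ⊆* D}`. -/
theorem stmt13 (A D : Set ℕ) (hA : CE A) (hAnc : ¬ IsComputableSet A) (hD : CE D)
    (hsmall : SmallSubset D A) (hmajor : MajorSubset D A) (I : Set (Set ℕ)) :
    ThreeAcceptable A I ↔
      ∃ C : Set ℕ, CE C ∧ I = {X : Set ℕ | Split A X ∧ SubsetStar (X ∩ C) D} := by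
  constructor
  · exact fun hI => hI.exists_ce_eq hA hD hsmall hmajor
  · rintro ⟨C, hC, rfl⟩
    exact hmajor.threeAcceptable hA hD hC
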